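/- arXiv:2406.10716 — 5 statements merged into one kernel-verified Lean document; each statement's English description precedes it below -/
import Mathlib

section
/- Let f : [0,1] → ℝ be quasi-continuous at every point of [0,1]. Then the set C_f of points of [0,1] at which f is continuous is dense in [0,1]. -/
/-!
Quasi-continuity at `x` puts `x` in the closure of the set where the oscillation of `f` is below any
prescribed `ε > 0`. These sets are open, so, if quasi-continuity points are dense, they are
dense open sets; their intersection over `ε = 1/n`, the set of continuity points, is dense by Baire.
-/

open Set Filter Topology

/-- `f` is quasi-continuous at `x₀` (relative to the domain `[0,1]`): for every `ε > 0`
and every open `U ∋ x₀` there is a nonempty relatively open `G ⊆ U ∩ [0,1]` on which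
`f` stays `ε`-close to `f x₀`. -/
def QuasiContinuousAt (f : ℝ → ℝ) (x₀ : ℝ) : Prop :=
  ∀ ε > (0:ℝ), ∀ U : Set ℝ, IsOpen U → x₀ ∈ U →
    ∃ O : Set ℝ, IsOpen O ∧ (O ∩ Set.Icc 0 1).Nonempty ∧
      O ∩ Set.Icc 0 1 ⊆ U ∧ ∀ x ∈ O ∩ Set.Icc 0 1, |f x₀ - f x| < ε

section Topological

variable {X Y : Type*} [TopologicalSpace X]

/-- Quasi-continuity at a point for maps of topological spaces: every neighbourhood of `x` contains
a nonempty open set that `f` maps into a given neighbourhood `V` of `f x`. The open set is encoded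
by a point `y` of it, near which `f` takes values in `V`. -/
def IsQuasicontinuousAt [TopologicalSpace Y] (f : X → Y) (x : X) : Prop :=
  ∀ V ∈ 𝓝 (f x), ∃ᶠ y in 𝓝 x, ∀ᶠ z in 𝓝 y, f z ∈ V

theorem upperSemicontinuous_oscillation [PseudoEMetricSpace Y] (f : X → Y) :
    UpperSemicontinuous (oscillation f) := by
  intro x ε hx
  obtain ⟨S, hS, hSε⟩ : ∃ S, ∃ _ : S ∈ (𝓝 x).map f, Metric.ediam S < ε := by
    simpa only [oscillation, iInf_lt_iff] using hx
  filter_upwards [eventually_eventually_nhds.2 hS] with y hy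
  have hSy : S ∈ (𝓝 y).map f := hy
  exact (biInf_le Metric.ediam hSy).trans_lt hSε

theorem IsQuasicontinuousAt.mem_closure_oscillation_lt [PseudoEMetricSpace Y] {f : X → Y} {x : X}
    (hf : IsQuasicontinuousAt f x) {ε : ENNReal} (hε : 0 < ε) :
    x ∈ closure {y | oscillation f y < ε} := by
  obtain ⟨δ, hδ, hδε⟩ := exists_between hε
  refine mem_closure_iff_frequently.2 ?_
  refine (hf _ (Metric.eball_mem_nhds (f x) (ENNReal.half_pos hδ.ne'))).mono fun y hy => ?_
  calc oscillation f y ≤ Metric.ediam (Metric.eball (f x) (δ / 2)) := biInf_le Metric.ediam hy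
    _ ≤ 2 * (δ / 2) := Metric.ediam_eball_le
    _ = δ := ENNReal.mul_div_cancel two_ne_zero ENNReal.ofNat_ne_top
    _ < ε := hδε

theorem eventually_residual_oscillation_lt [PseudoEMetricSpace Y] {f : X → Y}
    (hf : Dense {x | IsQuasicontinuousAt f x}) {ε : ENNReal} (hε : 0 < ε) :
    ∀ᶠ x in residual X, oscillation f x < ε :=
  residual_of_dense_open ((upperSemicontinuous_oscillation f).isOpen_preimage ε) <|
    dense_closure.1 <| hf.mono fun _ hx => hx.mem_closure_oscillation_lt hε

theorem eventually_residual_continuousAt [TopologicalSpace Y]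
    [TopologicalSpace.PseudoMetrizableSpace Y] {f : X → Y}
    (hf : Dense {x | IsQuasicontinuousAt f x}) : ∀ᶠ x in residual X, ContinuousAt f x := by
  let := TopologicalSpace.pseudoMetrizableSpacePseudoMetric Y
  have small_oscillation : ∀ᶠ x in residual X, ∀ n : ℕ, oscillation f x < (n : ENNReal)⁻¹ :=
    eventually_countable_forall.2 fun n =>
      eventually_residual_oscillation_lt hf (ENNReal.inv_pos.2 (ENNReal.natCast_ne_top n))
  filter_upwards [small_oscillation] with x hx
  by_contra hcont
  have oscillation_ne_zero : oscillation f x ≠ 0 :=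
    mt (Oscillation.eq_zero_iff_continuousAt f x).1 hcont
  obtain ⟨n, hn⟩ := ENNReal.exists_inv_nat_lt oscillation_ne_zero
  exact (hx n).not_gt hn

theorem dense_continuity_points_of_quasiContinuous_general [BaireSpace X] [TopologicalSpace Y]
    [TopologicalSpace.PseudoMetrizableSpace Y] {f : X → Y}
    (hf : Dense {x | IsQuasicontinuousAt f x}) : Dense {x | ContinuousAt f x} :=
  dense_of_mem_residual (eventually_residual_continuousAt hf)

theorem dense_continuousAt_domRestrict_iff [TopologicalSpace Y] {s : Set X} {f : X → Y} :
    Dense {x | ContinuousAt (s.domRestrict f) x} ↔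
      s ⊆ closure {x ∈ s | ContinuousWithinAt f s x} := by
  have image_eq : (↑) '' {x | ContinuousAt (s.domRestrict f) x} =
      {x ∈ s | ContinuousWithinAt f s x} := by
    ext x
    constructor
    · rintro ⟨⟨x, hxs⟩, hx, rfl⟩
      exact ⟨hxs, (continuousWithinAt_iff_continuousAt_domRestrict f hxs).2 hx⟩
    · rintro ⟨hxs, hx⟩
      exact ⟨⟨x, hxs⟩, (continuousWithinAt_iff_continuousAt_domRestrict f hxs).1 hx, rfl⟩
  rw [Subtype.dense_iff, image_eq]

end Topological

theorem quasiContinuousAt_iff_domRestrict {f : ℝ → ℝ} (x : Icc (0 : ℝ) 1) :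
    QuasiContinuousAt f x ↔ IsQuasicontinuousAt ((Icc 0 1).domRestrict f) x := by
  constructor
  · intro h V hV
    obtain ⟨ε, hε, hεV⟩ := Metric.mem_nhds_iff.1 hV
    refine mem_closure_iff_frequently.1 (mem_closure_iff.2 ?_)
    rintro _ ⟨U, hU, rfl⟩ hxU
    obtain ⟨O, hO, ⟨y, hyO, hyI⟩, hOU, hfO⟩ := h ε hε U hU hxU
    refine ⟨⟨y, hyI⟩, hOU ⟨hyO, hyI⟩, ?_⟩
    filter_upwards [(hO.preimage continuous_subtype_val).mem_nhds hyO] with z hzO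
    exact hεV (Metric.mem_ball'.2 (hfO z ⟨hzO, z.2⟩))
  · intro h ε hε U hU hxU
    obtain ⟨y, hy, hyU⟩ := ((h _ (Metric.ball_mem_nhds _ hε)).and_eventually
      ((hU.preimage continuous_subtype_val).mem_nhds hxU)).exists
    obtain ⟨_, hOf, ⟨O, hO, rfl⟩, hyO⟩ := mem_nhds_iff.1 hy
    refine ⟨O ∩ U, hO.inter hU, ⟨y, ⟨hyO, hyU⟩, y.2⟩, fun z hz => hz.1.2, fun z hz => ?_⟩
    exact Metric.mem_ball'.1 (hOf (a := ⟨z, hz.2⟩) hz.1.1)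

/-- If `f : [0,1] → ℝ` is quasi-continuous at every point of `[0,1]`,
then the set of continuity points of `f` is dense in `[0,1]`. -/
theorem dense_continuity_points_of_quasiContinuous (f : ℝ → ℝ)
    (hf : ∀ x ∈ Set.Icc (0:ℝ) 1, QuasiContinuousAt f x) :
    Set.Icc (0:ℝ) 1 ⊆
      closure {x ∈ Set.Icc (0:ℝ) 1 | ContinuousWithinAt f (Set.Icc 0 1) x} :=
  dense_continuousAt_domRestrict_iff.1 <| dense_continuity_points_of_quasiContinuous_general <|
    dense_univ.mono fun x _ => (quasiContinuousAt_iff_domRestrict x).1 (hf x x.2)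
end

section
/- A function f : [0,1] → ℝ is cliquish at every point of [0,1] if and only if the set C_f of points of [0,1] at which f is continuous is dense in [0,1]. -/
open Set Filter Topology

/-- `f` is cliquish at `x₀` (relative to the domain `[0,1]`): for every `ε > 0` and
every open `U ∋ x₀` there is a nonempty relatively open `G ⊆ U ∩ [0,1]` on which the
values of `f` are pairwise `ε`-close. -/
def CliquishAt (f : ℝ → ℝ) (x₀ : ℝ) : Prop :=
  ∀ ε > (0:ℝ), ∀ U : Set ℝ, IsOpen U → x₀ ∈ U →
    ∃ O : Set ℝ, IsOpen O ∧ (O ∩ Set.Icc 0 1).Nonempty ∧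
      O ∩ Set.Icc 0 1 ⊆ U ∧
      ∀ y ∈ O ∩ Set.Icc (0:ℝ) 1, ∀ z ∈ O ∩ Set.Icc (0:ℝ) 1, |f y - f z| < ε

/-! For an entourage `V`, let `W_V` be the union of the open sets on which the values of `f` are
pairwise `V`-close. Cliquishness of `f` at `x` says that `x` lies in the closure of every `W_V`, and
continuity of `f` at `x` says that `x` lies in every `W_V` itself. A countable basis of entourages
presents the continuity points as a countable intersection of the open sets `W_V`, so the theorem
is an instance of Baire's. -/

section SmallOscillation

variable {X Y : Type*} [TopologicalSpace X] {f : X → Y} {V W : Set (Y × Y)}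

/-- The set of points at which the oscillation of `f` is at most `V`, for an entourage `V`. It is
encoded as the union of all open sets on which the values of `f` are pairwise `V`-close. -/
def smallOscillationSet (f : X → Y) (V : Set (Y × Y)) : Set X :=
  ⋃₀ {G | IsOpen G ∧ ∀ y ∈ G, ∀ z ∈ G, (f y, f z) ∈ V}

theorem isOpen_smallOscillationSet : IsOpen (smallOscillationSet f V) :=
  isOpen_sUnion fun _ hG => hG.1

theorem smallOscillationSet_mono (hVW : V ⊆ W) :
    smallOscillationSet f V ⊆ smallOscillationSet f W :=
  sUnion_subset_sUnion fun _ ⟨hG, hGV⟩ => ⟨hG, fun y hy z hz => hVW (hGV y hy z hz)⟩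

end SmallOscillation

section UniformCodomain

open scoped Uniformity

variable {X Y : Type*} [TopologicalSpace X] [UniformSpace Y] {f : X → Y}

/-- Cliquishness at `x` of a function from a topological space to a uniform space, with entourages
`V` in place of the bounds `ε` of the metric definition. -/
def IsCliquishAt (f : X → Y) (x : X) : Prop :=
  ∀ V ∈ 𝓤 Y, ∀ U : Set X, IsOpen U → x ∈ U →
    ∃ G ⊆ U, IsOpen G ∧ G.Nonempty ∧ ∀ y ∈ G, ∀ z ∈ G, (f y, f z) ∈ V

theorem continuousAt_iff_forall_mem_smallOscillationSet {x : X} :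
    ContinuousAt f x ↔ ∀ V ∈ 𝓤 Y, x ∈ smallOscillationSet f V := by
  rw [Uniform.continuousAt_iff_prod, nhds_prod_eq,
    (nhds_basis_opens x).prod_self.tendsto_left_iff]
  refine forall₂_congr fun V _ => exists_congr fun G => ?_
  simp only [MapsTo, Prod.forall, mem_prod, mem_ofPred_eq]
  tauto

theorem isCliquishAt_iff_forall_mem_closure_smallOscillationSet {x : X} :
    IsCliquishAt f x ↔ ∀ V ∈ 𝓤 Y, x ∈ closure (smallOscillationSet f V) := by
  simp only [mem_closure_iff]
  refine forall₂_congr fun V _ => forall₃_congr fun U hU _ => ⟨?_, ?_⟩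
  · rintro ⟨G, hGU, hG, ⟨y, hy⟩, hGV⟩
    exact ⟨y, hGU hy, G, ⟨hG, hGV⟩, hy⟩
  · rintro ⟨y, hyU, G, ⟨hG, hGV⟩, hy⟩
    exact ⟨U ∩ G, inter_subset_left, hU.inter hG, ⟨y, hyU, hy⟩,
      fun y hy z hz => hGV y hy.2 z hz.2⟩

theorem forall_isCliquishAt_iff_forall_dense_smallOscillationSet :
    (∀ x, IsCliquishAt f x) ↔ ∀ V ∈ 𝓤 Y, Dense (smallOscillationSet f V) := by
  simp only [isCliquishAt_iff_forall_mem_closure_smallOscillationSet, Dense]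
  exact ⟨fun h V hV x => h x V hV, fun h x V hV => h V hV x⟩

theorem setOfPred_continuousAt_eq_iInter_smallOscillationSet {ι : Sort*} {p : ι → Prop}
    {B : ι → Set (Y × Y)} (hB : (𝓤 Y).HasBasis p B) :
    {x | ContinuousAt f x} = ⋂ (i) (_ : p i), smallOscillationSet f (B i) := by
  ext x
  rw [mem_ofPred_eq, continuousAt_iff_forall_mem_smallOscillationSet,
    hB.forall_iff fun _ _ hVW hx => smallOscillationSet_mono hVW hx]
  simp only [mem_iInter]

theorem cliquish_iff_dense_continuity_points_general [BaireSpace X] [(𝓤 Y).IsCountablyGenerated]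
    (f : X → Y) : (∀ x, IsCliquishAt f x) ↔ Dense {x | ContinuousAt f x} := by
  rw [forall_isCliquishAt_iff_forall_dense_smallOscillationSet]
  constructor
  · intro hdense
    obtain ⟨B, hB⟩ := (𝓤 Y).exists_antitone_basis
    rw [setOfPred_continuousAt_eq_iInter_smallOscillationSet hB.toHasBasis]
    simp only [iInter_true]
    exact dense_iInter_of_isOpen (fun _ => isOpen_smallOscillationSet)
      fun n => hdense (B n) (hB.mem n)
  · intro hdense V hV
    exact hdense.mono fun x hx => continuousAt_iff_forall_mem_smallOscillationSet.1 hx V hV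

end UniformCodomain

theorem dense_setOfPred_continuousAt_domRestrict_iff {X Y : Type*} [TopologicalSpace X]
    [TopologicalSpace Y] {f : X → Y} {s : Set X} :
    Dense {x : s | ContinuousAt (s.domRestrict f) x} ↔
      s ⊆ closure {x ∈ s | ContinuousWithinAt f s x} := by
  have himage : ((↑) '' {x : s | ContinuousAt (s.domRestrict f) x} : Set X) =
      {x ∈ s | ContinuousWithinAt f s x} := by
    ext x
    constructor
    · rintro ⟨x, hx, rfl⟩
      exact ⟨x.2, (continuousWithinAt_iff_continuousAt_domRestrict f x.2).2 hx⟩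
    · rintro ⟨hxs, hx⟩
      exact ⟨⟨x, hxs⟩, (continuousWithinAt_iff_continuousAt_domRestrict f hxs).1 hx, rfl⟩
  rw [Subtype.dense_iff, himage]

theorem cliquishAt_iff_isCliquishAt_domRestrict {f : ℝ → ℝ} (x : Icc (0 : ℝ) 1) :
    CliquishAt f x ↔ IsCliquishAt ((Icc (0 : ℝ) 1).domRestrict f) x := by
  constructor
  · rintro h V hV _ ⟨U, hU, rfl⟩ hx
    obtain ⟨ε, hε, hεV⟩ := Metric.mem_uniformity_dist.1 hV
    obtain ⟨O, hO, ⟨y, hyO, hy⟩, hOU, hOε⟩ := h ε hε U hU hx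
    exact ⟨Subtype.val ⁻¹' O, fun z hz => hOU ⟨hz, z.2⟩, hO.preimage continuous_subtype_val,
      ⟨⟨y, hy⟩, hyO⟩, fun y hy z hz => hεV (hOε y ⟨hy, y.2⟩ z ⟨hz, z.2⟩)⟩
  · intro h ε hε U hU hx
    obtain ⟨_, hOU, ⟨O, hO, rfl⟩, ⟨y, hy⟩, hOε⟩ :=
      h _ (Metric.dist_mem_uniformity hε) (Subtype.val ⁻¹' U)
        (hU.preimage continuous_subtype_val) hx
    exact ⟨O, hO, ⟨y, hy, y.2⟩, fun z hz => hOU (a := ⟨z, hz.2⟩) hz.1,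
      fun y hy z hz => hOε ⟨y, hy.2⟩ hy.1 ⟨z, hz.2⟩ hz.1⟩

/-- `f : [0,1] → ℝ` is cliquish at every point of `[0,1]` if and only if
the set of continuity points of `f` is dense in `[0,1]`. -/
theorem cliquish_iff_dense_continuity_points (f : ℝ → ℝ) :
    (∀ x ∈ Set.Icc (0:ℝ) 1, CliquishAt f x) ↔
      Set.Icc (0:ℝ) 1 ⊆
        closure {x ∈ Set.Icc (0:ℝ) 1 | ContinuousWithinAt f (Set.Icc 0 1) x} := by
  rw [← dense_setOfPred_continuousAt_domRestrict_iff,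
    ← cliquish_iff_dense_continuity_points_general]
  simp only [← cliquishAt_iff_isCliquishAt_domRestrict, Subtype.forall]
end

section
/- (Volterra's corollary) There is no function f : [0,1] → ℝ that is continuous at every rational point of [0,1] and discontinuous at every irrational point of [0,1]; i.e., no f : [0,1] → ℝ has C_f = ℚ ∩ [0,1]. -/
open Set Filter Topology

/-! The set of continuity points of a function is a `Gδ` set. In a nonempty Baire space a dense
`Gδ` set is not meagre, whereas in a `T₁` space without isolated points, such as `[0, 1]`, every
countable set is meagre. -/

section

open TopologicalSpace

variable {X : Type*} [TopologicalSpace X]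

theorem isMeagre_of_countable [T1Space X] [PerfectSpace X] {s : Set X} (hs : s.Countable) :
    IsMeagre s := by
  have isMeagre_singleton (x : X) : IsMeagre {x} :=
    (isClosed_singleton.isNowhereDense_iff.2 (interior_singleton x)).isMeagre
  rw [← biUnion_of_singleton s]
  exact isMeagre_biUnion hs fun x _ ↦ isMeagre_singleton x

theorem isGδ_preimage_setOfPred_continuousWithinAt {Y : Type*} [TopologicalSpace Y]
    [PseudoMetrizableSpace Y] (f : X → Y) (s : Set X) :
    IsGδ ((↑) ⁻¹' {x ∈ s | ContinuousWithinAt f s x} : Set s) := by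
  convert IsGδ.setOfPred_continuousAt (s.domRestrict f) using 1
  ext x
  simp [continuousWithinAt_iff_continuousAt_domRestrict f x.2]

theorem subset_closure_inter_of_dense {s t : Set X} (hs : s ⊆ closure (interior s))
    (ht : Dense t) : s ⊆ closure (s ∩ t) :=
  calc
    s ⊆ closure (interior s) := hs
    _ ⊆ closure (interior s ∩ t) :=
      closure_minimal (ht.open_subset_closure_inter isOpen_interior) isClosed_closure
    _ ⊆ closure (s ∩ t) := closure_mono (inter_subset_inter_left t interior_subset)

theorem volterra_corollary_general {Y : Type*} [TopologicalSpace Y] [PseudoMetrizableSpace Y]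
    {s t : Set X} [Nonempty s] [BaireSpace s] (ht : IsMeagre ((↑) ⁻¹' t : Set s))
    (hst : s ⊆ closure (s ∩ t)) :
    ¬ ∃ f : X → Y, {x ∈ s | ContinuousWithinAt f s x} = s ∩ t := by
  rintro ⟨f, hf⟩
  have isGδ_t : IsGδ ((↑) ⁻¹' t : Set s) := by
    simpa only [hf, Subtype.preimage_coe_self_inter] using
      isGδ_preimage_setOfPred_continuousWithinAt f s
  have dense_t : Dense ((↑) ⁻¹' t : Set s) := by
    rwa [Subtype.dense_iff, Subtype.image_preimage_coe]
  exact not_isMeagre_of_isGδ_of_dense isGδ_t dense_t ht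

end

/-- Volterra's corollary: no `f : [0,1] → ℝ` is continuous at every
rational point of `[0,1]` and discontinuous at every irrational point of `[0,1]`. -/
theorem volterra_corollary :
    ¬ ∃ f : ℝ → ℝ,
      {x ∈ Set.Icc (0:ℝ) 1 | ContinuousWithinAt f (Set.Icc 0 1) x} =
        Set.Icc (0:ℝ) 1 ∩ Set.range ((↑) : ℚ → ℝ) :=
  volterra_corollary_general
    (isMeagre_of_countable ((countable_range _).preimage Subtype.val_injective))
    (subset_closure_inter_of_dense (closure_interior_Icc zero_ne_one).ge Rat.denseRange_cast)
end

section
/- Let f : [0,1] → ℝ be regulated with f(x) > 0 for every x ∈ [0,1]. Then there exist N ∈ ℕ and x ∈ [0,1] such that f(y) ≥ 2^{−N} for every y ∈ [0,1] with |y − x| < 2^{−N}. -/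
open Set Filter Topology

/-!
Since `f > 0`, the closed sets `closure {y | 2⁻ⁿ ≤ f y}` cover the interval, so by Baire one of
them contains a nonempty open set. At a point `x` of that open set the right limit of `f` can be
computed along points with `2⁻ⁿ ≤ f y`, hence it is at least `2⁻ⁿ`; therefore `f` exceeds `2⁻ⁿ / 2`
at *all* points immediately to the right of `x`, and these contain a ball. Nothing here is special
to right limits: a limit along any open set adherent to `x` will do.
-/

section Topological

variable {X α : Type*} [TopologicalSpace X]

/-- `f` converges at `x` along some open set adherent to `x`. For real functions this covers both
one-sided limits (along `Ioi x` or `Iio x`) with one notion. The point `x` itself may or may not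
belong to the open set. -/
def HasLimitAlongOpen [TopologicalSpace α] (f : X → α) (x : X) : Prop :=
  ∃ V : Set X, IsOpen V ∧ x ∈ closure V ∧ ∃ L : α, Tendsto f (𝓝[V] x) (𝓝 L)

theorem frequently_nhdsWithin_of_closure_mem_nhds {V A : Set X} {x : X} (hV : IsOpen V)
    (hxV : x ∈ closure V) (hA : closure A ∈ 𝓝 x) : ∃ᶠ y in 𝓝[V] x, y ∈ A := by
  have hVA : x ∈ closure (V ∩ closure A) :=
    mem_closure_iff_frequently.2 ((mem_closure_iff_frequently.1 hxV).and_eventually hA)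
  have hx : x ∈ closure (V ∩ A) := closure_minimal hV.inter_closure isClosed_closure hVA
  rw [frequently_nhdsWithin_iff]
  exact (mem_closure_iff_frequently.1 hx).mono fun _ hy => hy.symm

theorem mem_closure_interior_of_mem_nhdsWithin {V A : Set X} {x : X} (hV : IsOpen V)
    (hxV : x ∈ closure V) (hA : A ∈ 𝓝[V] x) : x ∈ closure (interior A) := by
  obtain ⟨W, hW, hxW, hWV⟩ := mem_nhdsWithin.1 hA
  have hWV_int : W ∩ V ⊆ interior A := interior_maximal hWV (hW.inter hV)
  have hx : x ∈ closure (V ∩ W) := hW.closure_inter ⟨hxV, hxW⟩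
  exact closure_mono (inter_comm V W ▸ hWV_int) hx

variable [LinearOrder α] [TopologicalSpace α] {f : X → α} {a b : α}

theorem HasLimitAlongOpen.mem_closure_interior_superlevel [OrderClosedTopology α] {x : X}
    (hf : HasLimitAlongOpen f x) (hx : closure {y | b ≤ f y} ∈ 𝓝 x) (hab : a < b) :
    x ∈ closure (interior {y | a ≤ f y}) := by
  obtain ⟨V, hV, hxV, L, hL⟩ := hf
  have hbL : b ≤ L := ge_of_tendsto_of_frequently hL
    (frequently_nhdsWithin_of_closure_mem_nhds hV hxV hx)
  exact mem_closure_interior_of_mem_nhdsWithin hV hxV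
    ((hL.eventually_const_lt (hab.trans_le hbL)).mono fun _ => le_of_lt)

variable [OrderTopology α] [DenselyOrdered α] [NoMaxOrder α] [FirstCountableTopology α] {S : Set X}

theorem exists_gt_not_isNowhereDense_superlevel (hS : ¬IsMeagre S) (hf : ∀ x ∈ S, a < f x) :
    ∃ b > a, ¬IsNowhereDense {x ∈ S | b ≤ f x} := by
  obtain ⟨u, -, hau, hu⟩ := exists_seq_strictAnti_tendsto a
  by_contra! h
  have hcover : S ⊆ ⋃ n, {x ∈ S | u n ≤ f x} := fun x hx =>
    let ⟨n, hn⟩ := (hu.eventually_lt_const (hf x hx)).exists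
    mem_iUnion.2 ⟨n, hx, hn.le⟩
  exact hS ((isMeagre_iUnion fun n => (h (u n) (hau n)).isMeagre).mono hcover)

theorem exists_gt_mem_closure_interior_superlevel (hS : ¬IsMeagre S) (hf : ∀ x ∈ S, a < f x)
    (hlim : ∀ x ∈ S, HasLimitAlongOpen f x) :
    ∃ b > a, ∃ x ∈ S, x ∈ closure (interior {y | b ≤ f y}) := by
  obtain ⟨c, hac, hc⟩ := exists_gt_not_isNowhereDense_superlevel hS hf
  obtain ⟨b, hab, hbc⟩ := exists_between hac
  obtain ⟨x, ⟨hxS, -⟩, hx⟩ : ∃ x ∈ {x ∈ S | c ≤ f x}, closure {x ∈ S | c ≤ f x} ∈ 𝓝 x := by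
    simpa only [isNowhereDense_iff_forall_notMem_nhds, not_forall, not_not, exists_prop] using hc
  have hx' : closure {y | c ≤ f y} ∈ 𝓝 x := mem_of_superset hx (closure_mono fun _ hy => hy.2)
  exact ⟨b, hab, x, hxS, (hlim x hxS).mem_closure_interior_superlevel hx' hbc⟩

end Topological

theorem hasLimitAlongOpen_of_tendsto_nhdsWithin_Ioc {X α : Type*} [TopologicalSpace X]
    [LinearOrder X] [OrderTopology X] [DenselyOrdered X] [TopologicalSpace α] {f : X → α} {x b : X}
    {L : α} (hxb : x < b) (hL : Tendsto f (𝓝[Ioc x b] x) (𝓝 L)) : HasLimitAlongOpen f x :=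
  ⟨Ioo x b, isOpen_Ioo, closure_Ioo hxb.ne ▸ left_mem_Icc.2 hxb.le, L,
    hL.mono_left (nhdsWithin_mono x Ioo_subset_Ioc_self)⟩

theorem exists_two_zpow_neg_lt {ε : ℝ} (hε : 0 < ε) : ∃ N : ℕ, (2 : ℝ) ^ (-(N : ℤ)) < ε := by
  obtain ⟨N, hN⟩ := exists_pow_lt_of_lt_one hε one_half_lt_one
  exact ⟨N, by simpa using hN⟩

theorem regulated_pos_uniformly_on_ball_general {X : Type*} [PseudoMetricSpace X] {f : X → ℝ}
    {S U : Set X} (hS : ¬IsMeagre S) (hU : IsOpen U) (hSU : S ⊆ U)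
    (hlim : ∀ x ∈ S, HasLimitAlongOpen f x) (hpos : ∀ x ∈ S, 0 < f x) :
    ∃ N : ℕ, ∃ x, Metric.ball x ((2 : ℝ) ^ (-(N : ℤ))) ⊆ U ∩ {y | (2 : ℝ) ^ (-(N : ℤ)) ≤ f y} := by
  obtain ⟨b, hb, z, hzS, hz⟩ := exists_gt_mem_closure_interior_superlevel hS hpos hlim
  obtain ⟨x, hxU, hxb⟩ := mem_closure_iff.1 hz U hU (hSU hzS)
  obtain ⟨r, hr, hball⟩ := Metric.isOpen_iff.1 (hU.inter isOpen_interior) x ⟨hxU, hxb⟩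
  obtain ⟨N, hN⟩ := exists_two_zpow_neg_lt (lt_min hb hr)
  obtain ⟨hNb, hNr⟩ := lt_min_iff.1 hN
  refine ⟨N, x, fun y hy => ?_⟩
  obtain ⟨hyU, hyb⟩ := hball (Metric.ball_subset_ball hNr.le hy)
  have hbf : y ∈ {y | b ≤ f y} := interior_subset hyb
  exact ⟨hyU, hNb.le.trans hbf⟩

/-- For a regulated `f : [0,1] → ℝ` with `f(x) > 0` on `[0,1]`, there are
`N ∈ ℕ` and `x ∈ [0,1]` such that `f(y) ≥ 2^(-N)` for all `y ∈ [0,1]` with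
`|y - x| < 2^(-N)`. -/
theorem regulated_pos_uniformly_on_ball (f : ℝ → ℝ)
    (hfr : ∀ x ∈ Set.Ico (0:ℝ) 1, ∃ L : ℝ, Tendsto f (𝓝[Set.Ioc x 1] x) (𝓝 L))
    (hfl : ∀ x ∈ Set.Ioc (0:ℝ) 1, ∃ L : ℝ, Tendsto f (𝓝[Set.Ico 0 x] x) (𝓝 L))
    (hpos : ∀ x ∈ Set.Icc (0:ℝ) 1, 0 < f x) :
    ∃ N : ℕ, ∃ x ∈ Set.Icc (0:ℝ) 1,
      ∀ y ∈ Set.Icc (0:ℝ) 1, |y - x| < (2:ℝ) ^ (-(N:ℤ)) → (2:ℝ) ^ (-(N:ℤ)) ≤ f y := by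
  have hlim : ∀ x ∈ Ioo (0:ℝ) 1, HasLimitAlongOpen f x := fun x hx =>
    let ⟨_, hL⟩ := hfr x (Ioo_subset_Ico_self hx)
    hasLimitAlongOpen_of_tendsto_nhdsWithin_Ioc hx.2 hL
  obtain ⟨N, x, hx⟩ := regulated_pos_uniformly_on_ball_general
    (not_isMeagre_of_isOpen isOpen_Ioo (nonempty_Ioo.2 one_pos)) isOpen_Ioo subset_rfl hlim
    fun x hx => hpos x (Ioo_subset_Icc_self hx)
  have hx01 := (hx (Metric.mem_ball_self (by positivity))).1
  exact ⟨N, x, Ioo_subset_Icc_self hx01, fun y _ hy => (hx hy).2⟩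
end

section
/- Let (X_n)_{n∈ℕ} be an increasing sequence (X_n ⊆ X_{n+1}) of closed subsets of [0,1], and define h : [0,1] → ℝ by h(x) = 2^{−n} if n is the least index with x ∈ X_n, and h(x) = 0 if x ∉ ⋃_{n∈ℕ} X_n. Then h is upper semicontinuous on [0,1] and cliquish at every point of [0,1]. -/
open Set Filter Topology
open scoped Classical

/-- The function `h` of the paper: `h(x) = 2^(-n)` if `n` is the least index with
`x ∈ X n`, and `h(x) = 0` if `x` belongs to no `X n`. -/
noncomputable def hFun (X : ℕ → Set ℝ) (x : ℝ) : ℝ :=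
  if hx : ∃ n, x ∈ X n then (2:ℝ) ^ (-(Nat.find hx : ℤ)) else 0

/-!
The superlevel set `{h ≥ a}` is everything if `a ≤ 0`; if `a > 0` it is the union of the finitely
many closed sets `X n` with `a ≤ 2^(-n)`. Hence `h` is upper semicontinuous. Cliquishness then
follows from `h ≥ 0`: if `m` is the infimum of `h` over a nonempty set `V` and `h x < m + ε` for
some `x ∈ V`, then by upper semicontinuity `m ≤ h < m + ε` on a neighbourhood of `x` in `V`.
-/

theorem exists_isOpen_abs_sub_lt_of_upperSemicontinuousOn {α : Type*} [TopologicalSpace α]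
    {f : α → ℝ} {s : Set α} (hf : UpperSemicontinuousOn f s) (hbdd : BddBelow (f '' s))
    (hs : s.Nonempty) {ε : ℝ} (hε : 0 < ε) :
    ∃ O : Set α, IsOpen O ∧ (O ∩ s).Nonempty ∧ ∀ y ∈ O ∩ s, ∀ z ∈ O ∩ s, |f y - f z| < ε := by
  obtain ⟨_, ⟨x, hxs, rfl⟩, hx⟩ :=
    exists_lt_of_csInf_lt (hs.image f) (lt_add_of_pos_right (sInf (f '' s)) hε)
  obtain ⟨O, hO, hxO, hlt⟩ := mem_nhdsWithin.1 (hf x hxs _ hx)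
  refine ⟨O, hO, ⟨x, hxO, hxs⟩, fun y hy z hz => ?_⟩
  have sInf_le {w : α} (hw : w ∈ O ∩ s) : sInf (f '' s) ≤ f w :=
    csInf_le hbdd (mem_image_of_mem f hw.2)
  have lt_add {w : α} (hw : w ∈ O ∩ s) : f w < sInf (f '' s) + ε := hlt hw
  rw [abs_sub_lt_iff]
  constructor <;> linarith [sInf_le hy, sInf_le hz, lt_add hy, lt_add hz]

theorem cliquishAt_of_upperSemicontinuousOn {f : ℝ → ℝ} (hf : UpperSemicontinuousOn f (Icc 0 1))
    (hbdd : BddBelow (f '' Icc 0 1)) {x : ℝ} (hx : x ∈ Icc (0 : ℝ) 1) : CliquishAt f x := by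
  intro ε hε U hU hxU
  obtain ⟨O, hO, hne, hdist⟩ := exists_isOpen_abs_sub_lt_of_upperSemicontinuousOn
    (hf.mono inter_subset_right) (hbdd.mono (image_mono inter_subset_right)) ⟨x, hxU, hx⟩ hε
  rw [← inter_assoc] at hne hdist
  exact ⟨O ∩ U, hO.inter hU, hne, fun y hy => hy.1.2, hdist⟩

theorem hFun_nonneg (X : ℕ → Set ℝ) (x : ℝ) : 0 ≤ hFun X x := by
  unfold hFun
  split_ifs <;> positivity

theorem le_hFun_iff (X : ℕ → Set ℝ) (x : ℝ) {a : ℝ} (ha : 0 < a) :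
    a ≤ hFun X x ↔ ∃ n : ℕ, a ≤ (2 : ℝ) ^ (-(n : ℤ)) ∧ x ∈ X n := by
  unfold hFun
  split_ifs with hx
  · refine ⟨fun h => ⟨Nat.find hx, h, Nat.find_spec hx⟩, fun ⟨n, han, hxn⟩ => han.trans ?_⟩
    have find_le : Nat.find hx ≤ n := Nat.find_min' hx hxn
    gcongr
    norm_num
  · exact iff_of_false ha.not_ge fun ⟨n, _, hxn⟩ => hx ⟨n, hxn⟩

theorem finite_setOf_le_zpow_neg {a b : ℝ} (ha : 0 < a) (hb : 1 < b) :
    {n : ℕ | a ≤ b ^ (-(n : ℤ))}.Finite := by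
  have tendsto_zero : Tendsto (fun n : ℕ => b ^ (-(n : ℤ))) cofinite (𝓝 0) := by
    simpa only [Nat.cofinite_eq_atTop, zpow_neg, zpow_natCast, inv_pow] using
      tendsto_pow_atTop_nhds_zero_of_lt_one (r := b⁻¹) (by positivity) (inv_lt_one_of_one_lt₀ hb)
  simpa only [eventually_cofinite, not_lt] using tendsto_zero.eventually_lt_const ha

theorem upperSemicontinuous_hFun {X : ℕ → Set ℝ} (hcl : ∀ n, IsClosed (X n)) :
    UpperSemicontinuous (hFun X) := by
  refine upperSemicontinuous_iff_isClosed_preimage.2 fun a => ?_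
  rcases le_or_gt a 0 with ha | ha
  · have preimage_eq : hFun X ⁻¹' Ici a = univ :=
      eq_univ_of_forall fun x => ha.trans (hFun_nonneg X x)
    exact preimage_eq ▸ isClosed_univ
  · have preimage_eq : hFun X ⁻¹' Ici a = ⋃ n ∈ {n : ℕ | a ≤ (2 : ℝ) ^ (-(n : ℤ))}, X n := by
      ext x
      simp only [mem_preimage, mem_Ici, le_hFun_iff X x ha, mem_ofPred_eq, mem_iUnion, exists_prop]
    rw [preimage_eq]
    exact (finite_setOf_le_zpow_neg ha one_lt_two).isClosed_biUnion fun n _ => hcl n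

theorem hFun_usco_and_cliquish_general (X : ℕ → Set ℝ) (hcl : ∀ n, IsClosed (X n)) :
    UpperSemicontinuous (hFun X) ∧ ∀ x ∈ Icc (0 : ℝ) 1, CliquishAt (hFun X) x := by
  have husc : UpperSemicontinuous (hFun X) := upperSemicontinuous_hFun hcl
  have hbdd : BddBelow (hFun X '' Icc 0 1) :=
    ⟨0, forall_mem_image.2 fun x _ => hFun_nonneg X x⟩
  exact ⟨husc, fun _ => cliquishAt_of_upperSemicontinuousOn (husc.upperSemicontinuousOn _) hbdd⟩

/-- for an increasing sequence of closed subsets of `[0,1]`, the function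
`h` is upper semicontinuous on `[0,1]` and cliquish at every point of `[0,1]`. -/
theorem hFun_usco_and_cliquish (X : ℕ → Set ℝ)
    (hcl : ∀ n, IsClosed (X n)) (hsub : ∀ n, X n ⊆ Set.Icc 0 1)
    (hmono : ∀ n, X n ⊆ X (n + 1)) :
    UpperSemicontinuousOn (hFun X) (Set.Icc 0 1) ∧
    ∀ x ∈ Set.Icc (0:ℝ) 1, CliquishAt (hFun X) x := by
  obtain ⟨husc, hcliq⟩ := hFun_usco_and_cliquish_general X hcl
  exact ⟨husc.upperSemicontinuousOn _, hcliq⟩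
end
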